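/- arXiv:0801.2939 — 2 statements merged into one kernel-verified Lean document; each statement's English description precedes it below -/
import Mathlib

section
/- Let 𝓗 = (V, 𝓔) and 𝓗' = (V', 𝓔') be hypergraphs with V = {1,...,n} and V' = {1,...,m}. Then 𝓗 ⪯ 𝓗' (there is a quotient map from 𝓗' to 𝓗) if and only if f_𝓗 ≤ f_{𝓗'} (the Boolean function of 𝓗 is a simple minor of that of 𝓗'). -/
open Finset

abbrev BF := Σ n : ℕ, (Fin n → Bool) → Bool

def Minor (g f : BF) : Prop :=
  ∃ σ : Fin f.1 → Fin g.1, ∀ a : Fin g.1 → Bool, g.2 a = f.2 (a ∘ σ)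

def EquivBF (f g : BF) : Prop := Minor f g ∧ Minor g f

def StrictMinor (g f : BF) : Prop := Minor g f ∧ ¬ Minor f g

def Essential {n : ℕ} (f : (Fin n → Bool) → Bool) (i : Fin n) : Prop :=
  ∃ a b : Fin n → Bool, (∀ j, j ≠ i → a j = b j) ∧ f a ≠ f b

noncomputable def essArity {n : ℕ} (f : (Fin n → Bool) → Bool) : ℕ :=
  Nat.card {i : Fin n // Essential f i}

noncomputable def gapBF (f : BF) : ℕ :=
  sInf {d | ∃ g : BF, StrictMinor g f ∧ d = essArity f.2 - essArity g.2}

def fH {n : ℕ} (𝓔 : Finset (Finset (Fin n))) : (Fin n → Bool) → Bool :=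
  fun a => decide (Odd (𝓔.filter (fun E => ∀ i ∈ E, a i = true)).card)

def IsQuotientMap {n m : ℕ} (𝓔 : Finset (Finset (Fin n)))
    (𝓔' : Finset (Finset (Fin m))) (h : Fin m → Fin n) : Prop :=
  ∀ s : Finset (Fin n), s ∈ 𝓔 ↔ Odd (𝓔'.filter (fun t => t.image h = s)).card

abbrev HG := Σ n : ℕ, Finset (Finset (Fin n))

def HMinor (H H' : HG) : Prop := ∃ h : Fin H'.1 → Fin H.1, IsQuotientMap H.2 H'.2 h

def identEdges {n : ℕ} (𝓔 : Finset (Finset (Fin n))) (i j : Fin n) :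
    Finset (Finset (Fin n)) :=
  Finset.univ.filter (fun E => j ∉ E ∧
    ((i ∉ E ∧ E ∈ 𝓔) ∨
     (i ∈ E ∧ Odd ((if insert j E ∈ 𝓔 then 1 else 0) +
        (if E ∈ 𝓔 then 1 else 0) + (if insert j (E.erase i) ∈ 𝓔 then 1 else 0)))))

def EdgeIso {n : ℕ} (𝓔 𝓔' : Finset (Finset (Fin n))) : Prop :=
  ∃ φ : Fin n ≃ Fin n, ∀ s : Finset (Fin n), s.image φ ∈ 𝓔' ↔ s ∈ 𝓔

def IrreducibleBF (f : BF) : Prop :=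
  ∃ f' : BF, StrictMinor f' f ∧ ∀ g : BF, StrictMinor g f → Minor g f'

theorem zeta_inj {n : ℕ} (c d : Finset (Fin n) → ZMod 2) :
    (∀ s, c s = d s) ↔ ∀ A : Finset (Fin n), ∑ s ∈ A.powerset, c s = ∑ s ∈ A.powerset, d s := by
  constructor
  · intro h A
    exact Finset.sum_congr rfl fun s _ => h s
  · intro h s
    induction s using Finset.strongInduction with
    | H A ih =>
      have h1 := h A
      rw [← Finset.sum_erase_add _ _ (Finset.mem_powerset_self A),
        ← Finset.sum_erase_add _ d (Finset.mem_powerset_self A)] at h1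
      have h2 : ∑ s ∈ A.powerset.erase A, c s = ∑ s ∈ A.powerset.erase A, d s := by
        refine Finset.sum_congr rfl fun s hs => ih s ?_
        rw [Finset.mem_erase, Finset.mem_powerset] at hs
        exact Finset.ssubset_iff_subset_ne.2 ⟨hs.2, hs.1⟩
      rw [h2] at h1
      exact add_left_cancel h1

theorem cast_eq_iff_odd (a b : ℕ) : (a : ZMod 2) = b ↔ (Odd a ↔ Odd b) := by
  rw [ZMod.natCast_eq_natCast_iff, Nat.ModEq, Nat.odd_iff, Nat.odd_iff]
  omega

theorem quotient_iff {n m : ℕ} (𝓔 : Finset (Finset (Fin n)))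
    (𝓔' : Finset (Finset (Fin m))) (h : Fin m → Fin n) :
    IsQuotientMap 𝓔 𝓔' h ↔ ∀ a : Fin n → Bool, fH 𝓔 a = fH 𝓔' (a ∘ h) := by
  have key : IsQuotientMap 𝓔 𝓔' h ↔ ∀ s : Finset (Fin n),
      (((𝓔.filter (fun t => t = s)).card : ℕ) : ZMod 2) =
        ((𝓔'.filter (fun t => t.image h = s)).card : ℕ) := by
    refine forall_congr' fun s => ?_
    rw [cast_eq_iff_odd, Finset.filter_eq']
    split_ifs with hs <;> simp [hs]
  rw [key, zeta_inj]
  have sumA : ∀ A : Finset (Fin n),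
      (∑ s ∈ A.powerset, (((𝓔.filter (fun t => t = s)).card : ℕ) : ZMod 2)) =
        ((𝓔.filter (fun t => t ⊆ A)).card : ℕ) := by
    intro A
    rw [← Nat.cast_sum, Finset.card_eq_sum_card_fiberwise (f := fun t => t) (t := A.powerset)]
    · congr 1
      refine Finset.sum_congr rfl fun s hs => ?_
      congr 1
      ext t
      simp only [Finset.mem_filter, Finset.mem_powerset] at *
      grind
    · intro t ht
      simpa using (Finset.mem_filter.1 ht).2
  have sumB : ∀ A : Finset (Fin n),
      (∑ s ∈ A.powerset, (((𝓔'.filter (fun t => t.image h = s)).card : ℕ) : ZMod 2)) =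
        ((𝓔'.filter (fun t => t.image h ⊆ A)).card : ℕ) := by
    intro A
    rw [← Nat.cast_sum,
      Finset.card_eq_sum_card_fiberwise (f := fun t => t.image h) (t := A.powerset)]
    · congr 1
      refine Finset.sum_congr rfl fun s hs => ?_
      congr 1
      ext t
      simp only [Finset.mem_filter, Finset.mem_powerset] at *
      grind
    · intro t ht
      have := (Finset.mem_filter.1 ht).2
      exact Finset.mem_coe.2 (Finset.mem_powerset.2 this)
  simp only [sumA, sumB, cast_eq_iff_odd]
  have conv1 : ∀ a : Fin n → Bool, (fH 𝓔 a = fH 𝓔' (a ∘ h)) ↔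
      (Odd (𝓔.filter (fun t => t ⊆ Finset.univ.filter (fun i => a i = true))).card ↔
       Odd (𝓔'.filter
        (fun t => t.image h ⊆ Finset.univ.filter (fun i => a i = true))).card) := by
    intro a
    simp only [fH, decide_eq_decide, Finset.subset_iff, Finset.mem_filter, Finset.mem_univ,
      true_and, Finset.forall_mem_image, Function.comp]
  simp only [conv1]
  constructor
  · intro H a
    exact H _
  · intro H A
    have := H (fun i => decide (i ∈ A))
    simpa using this

theorem hypergraph_minor_iff_function_minor (n m : ℕ)
    (𝓔 : Finset (Finset (Fin n))) (𝓔' : Finset (Finset (Fin m))) :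
    HMinor ⟨n, 𝓔⟩ ⟨m, 𝓔'⟩ ↔ Minor ⟨n, fH 𝓔⟩ ⟨m, fH 𝓔'⟩ := by
  exact exists_congr fun h => quotient_iff 𝓔 𝓔' h
end

section
/- A Boolean function f : {0,1}^n → {0,1} with at least two essential variables has arity gap two if and only if its Zhegalkin polynomial is, up to permutation of variables and addition of inessential variables, one of: x_1+...+x_m+c (m ≥ 2), x_1x_2+x_1+c, x_1x_2+x_1x_3+x_2x_3+c, or x_1x_2+x_1x_3+x_2x_3+x_1+x_2+c, for c ∈ {0,1}; otherwise its arity gap is one. -/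
open Finset

def cEdges {k : ℕ} (c : Bool) : Finset (Finset (Fin k)) := if c then {∅} else ∅

def gapE1 (m : ℕ) (c : Bool) : Finset (Finset (Fin m)) :=
  (Finset.univ.image fun i : Fin m => ({i} : Finset (Fin m))) ∪ cEdges c

def gapE2 (c : Bool) : Finset (Finset (Fin 2)) := {{0, 1}, {0}} ∪ cEdges c

def gapE3 (c : Bool) : Finset (Finset (Fin 3)) := {{0, 1}, {0, 2}, {1, 2}} ∪ cEdges c

def gapE4 (c : Bool) : Finset (Finset (Fin 3)) :=
  {{0, 1}, {0, 2}, {1, 2}, {0}, {1}} ∪ cEdges c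


/-! ### The combinatorial core -/

section Core
variable {Y : Type*} [DecidableEq Y]

/-- `φ` does not depend on the coordinate `t`. -/
def IndepOf (φ : (Y → Bool) → Bool) (t : Y) : Prop := ∀ y v, φ (Function.update y t v) = φ y

theorem indep_eq {t u : Y} (htu : t ≠ u) {φ ψ : (Y → Bool) → Bool}
    (h : (IndepOf φ t ∧ IndepOf ψ t) ∨ (IndepOf φ u ∧ IndepOf ψ u))
    (he : ∀ y, φ (Function.update y t (y u)) = ψ (Function.update y t (y u))) (y : Y → Bool) :
    φ y = ψ y := by
  rcases h with ⟨h1, h2⟩ | ⟨h1, h2⟩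
  · have := he y
    rwa [h1, h2] at this
  · have := he (Function.update y u (y t))
    have e : Function.update (Function.update y u (y t)) t ((Function.update y u (y t)) u)
        = Function.update y u (y t) := by
      funext w
      by_cases h : w = t
      · subst h; simp [htu]
      · simp [h]
    rwa [e, h1, h2] at this

theorem indep_two {t u : Y} (htu : t ≠ u) {φ : (Y → Bool) → Bool} (h1 : IndepOf φ u)
    (h2 : IndepOf (fun y => φ (Function.update y t (y u))) u) : IndepOf φ t := by
  have key : ∀ y v v', φ (Function.update y t v) = φ (Function.update y t v') := by
    intro y v v'
    have a1 := h2 y v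
    have a2 := h2 y v'
    simp only [Function.update_self] at a1 a2
    rw [Function.update_comm htu.symm, h1] at a1 a2
    rw [a1, a2]
  intro y v
  rw [key y v (y t), Function.update_eq_self]

theorem indep_three {t u w : Y} (htu : t ≠ u) (hwt : w ≠ t) (hwu : w ≠ u) {φ : (Y → Bool) → Bool}
    (h1 : IndepOf φ t ∨ IndepOf φ u)
    (h2 : IndepOf (fun y => φ (Function.update y t (y u))) w) : IndepOf φ w := by
  intro y v
  rcases h1 with h1 | h1
  · have := h2 y v
    simp only [h1 _ _] at this
    exact this
  · have := h2 (Function.update y u (y t)) v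
    simp only at this
    have e1 : Function.update (Function.update (Function.update y u (y t)) w v) t
        (Function.update (Function.update y u (y t)) w v u)
        = Function.update (Function.update y w v) u (y t) := by
      funext x
      by_cases h : x = t
      · subst h; simp [htu, hwu.symm, hwt.symm]
      · by_cases h' : x = u
        · subst h'; simp [h, hwu.symm]
        · by_cases h'' : x = w <;> simp [h, h', h'', hwt, hwu, Function.update_apply]
    have e2 : Function.update (Function.update y u (y t)) t (Function.update y u (y t) u)
        = Function.update y u (y t) := by
      funext w
      by_cases h : w = t
      · subst h; simp [htu]
      · simp [h]
    rwa [e1, e2, h1, h1] at this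

theorem indep_four {t u : Y} (htu : t ≠ u) {φ ψ γ : (Y → Bool) → Bool} (c : Bool)
    (hφ : IndepOf φ u) (hψ : IndepOf ψ t) (hγt : IndepOf γ t) (hγu : IndepOf γ u)
    (he : ∀ y, y t = y u → φ y = ψ y)
    (h1 : ∀ y, y t = c → φ y = γ y) (h2 : ∀ y, y t = !c → ψ y = γ y) (y : Y → Bool) :
    φ y = γ y ∧ ψ y = γ y := by
  constructor
  · by_cases h : y t = c
    · exact h1 y h
    · have h' : y t = !c := by revert h; cases y t <;> cases c <;> simp
      rw [← hφ y (!c), ← hγu y (!c), he _ (by simp [htu, h']), h2 _ (by simp [htu, h'])]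
  · rw [← hψ y (!c), ← hγt y (!c), h2 _ (by simp)]

/-- For a `φ` (independent of `u`) and `ψ` (independent of `t`) that agree when `t`, `u` agree. -/
theorem indep_six {t u w : Y} (htu : t ≠ u) {φ ψ : (Y → Bool) → Bool} (c : Bool)
    (hφ : IndepOf φ u) (hψ : IndepOf ψ t)
    (he : ∀ y, y t = y u → φ y = ψ y)
    (h : IndepOf (fun y => if y t = c then φ y else ψ y) w) (hwt : w ≠ t) :
    IndepOf ψ w ∧ (w ≠ u → IndepOf φ w) := by
  have hψw : IndepOf ψ w := by
    intro y v
    have a := h (Function.update y t (!c)) v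
    simp [Ne.symm hwt] at a
    rw [Function.update_comm (Ne.symm hwt), hψ, hψ] at a
    exact a
  refine ⟨hψw, ?_⟩
  intro hwu y v
  have a := h y v
  by_cases hc : y t = c
  · simpa [Ne.symm hwt, hc] using a
  · rw [← hφ (Function.update y w v) (y t), he _ (by simp [htu, Ne.symm hwt]),
      Function.update_comm hwu, hψw, ← hφ y (y t), he _ (by simp [htu])]

theorem indep_five {t u w : Y} (htu : t ≠ u) {φ ψ : (Y → Bool) → Bool} (c : Bool)
    (hφ : IndepOf φ u) (hψ : IndepOf ψ t)
    (he : ∀ y, y t = y u → φ y = ψ y)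
    (h : IndepOf (fun y => if y t = c then φ y else ψ y) w) (hw : w = t ∨ w = u) :
    IndepOf φ t := by
  by_cases hwt : w = t
  · subst hwt
    have k1 : ∀ y, φ (Function.update y w c) = ψ y := by
      intro y
      have a := h y c
      have b := h y (!c)
      simp at a b
      rw [a, ← b, hψ]
    have k2 : ∀ y, φ (Function.update y w (!c)) = φ (Function.update y w c) := by
      intro y
      rw [← hφ _ (!c), he _ (by simp [htu]), ← hφ (Function.update y w c) (!c),
        Function.update_comm htu, Function.update_comm htu, k1, hψ]
    intro y v
    have k3 : ∀ v, φ (Function.update y w v) = φ (Function.update y w c) := by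
      intro v
      have := k2 y
      cases v <;> cases c <;> simp_all
    rw [k3, ← k3 (y w), Function.update_eq_self]
  · have hwu : w = u := by tauto
    have hψw := (indep_six htu c hφ hψ he h hwt).1
    subst hwu
    have : ∀ y, φ y = ψ y := by
      intro y
      rw [← hφ y (y t), he _ (by simp [htu]), hψw]
    intro y v
    rw [this, this, hψ]

theorem core_sel {f : Bool → Bool → Bool → (Y → Bool) → Bool}
    (h0 : ∀ x k y, f x x k y = f x x false y)
    (Ei : ¬ ∀ xj xk y, f false xj xk y = f true xj xk y)
    (Et : ∀ t, ¬ ∀ xi xj xk, IndepOf (f xi xj xk) t)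
    (H3 : ∀ t, (∀ xk y, f (y t) false xk y = f (y t) true xk y) ∨
      (∀ xj y, f (y t) xj false y = f (y t) xj true y) ∨
      ∃ w, ∀ xj xk, IndepOf (fun y => f (y t) xj xk y) w)
    (a1 : ∀ y, f false false false y = f true false true y)
    (a2 : ∀ y, f false true false y = f true true true y)
    (a3 : ∀ y, f false false false y = f false true true y)
    (a4 : ∀ y, f true false false y = f true true true y) (t : Y) : False := by
  have b1 := h0 false true
  have b2 := h0 true true
  have fin : (∀ y, f false false false y = f true true true y) → False := by
    intro h
    apply Ei
    intro xj xk y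
    have := h y; have := a1 y; have := a2 y; have := a3 y; have := a4 y
    have := b1 y; have := b2 y
    cases xj <;> cases xk <;> simp_all
  rcases H3 t with h | h | ⟨w, h⟩
  · apply fin
    intro y
    have h1 := h false y
    have h2 := h true y
    have := a1 y; have := a2 y; have := a3 y; have := a4 y
    have := b1 y; have := b2 y
    cases hy : y t <;> simp_all
  · apply fin
    intro y
    have h1 := h false y
    have h2 := h true y
    have := a1 y; have := a2 y; have := a3 y; have := a4 y
    have := b1 y; have := b2 y
    cases hy : y t <;> simp_all
  · by_cases hwt : w = t
    · subst hwt
      apply fin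
      intro y
      have h1 := h false true y (!(y w))
      have h2 := h true false y (!(y w))
      have h3 := h false false y (!(y w))
      simp only [Function.update_self] at h1 h2 h3
      have := a1 y; have := a2 y; have := a3 y; have := a4 y
      have := b1 y; have := b2 y
      generalize Function.update y w (!(y w)) = z at *
      have := a1 z; have := a2 z; have := a3 z; have := a4 z
      have := b1 z; have := b2 z
      cases hy : y w <;> simp_all
    · apply Et w
      have g0 : IndepOf (f false false false) w := by
        intro y v
        have h1 := h false false y v
        have h2 := h false true y v
        simp only [Function.update_of_ne (Ne.symm hwt)] at h1 h2
        have := a1 y; have := a1 (Function.update y w v)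
        cases hy : y t <;> simp_all
      have g1 : IndepOf (f true true true) w := by
        intro y v
        have h1 := h true false y v
        have h2 := h true true y v
        simp only [Function.update_of_ne (Ne.symm hwt)] at h1 h2
        have := a2 y; have := a2 (Function.update y w v)
        cases hy : y t <;> simp_all
      intro xi xj xk y v
      have := g0 y v; have := g1 y v
      have := a1 y; have := a2 y; have := a3 y; have := a4 y
      have := b1 y; have := b2 y
      generalize Function.update y w v = z at *
      have := a1 z; have := a2 z; have := a3 z; have := a4 z
      have := b1 z; have := b2 z
      cases xi <;> cases xj <;> cases xk <;> simp_all

theorem core_tu {f : Bool → Bool → Bool → (Y → Bool) → Bool}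
    (h0 : ∀ x k y, f x x k y = f x x false y)
    (Ei : ¬ ∀ xj xk y, f false xj xk y = f true xj xk y)
    (Ej : ¬ ∀ xi xk y, f xi false xk y = f xi true xk y)
    (Et : ∀ t, ¬ ∀ xi xj xk, IndepOf (f xi xj xk) t)
    {t u : Y}
    (H4 : t ≠ u → (∀ xj xk y, f false xj xk (Function.update y t (y u)) = f true xj xk (Function.update y t (y u))) ∨
      (∀ xi xk y, f xi false xk (Function.update y t (y u)) = f xi true xk (Function.update y t (y u))) ∨
      (∀ xi xj y, f xi xj false (Function.update y t (y u)) = f xi xj true (Function.update y t (y u))) ∨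
      ∃ w, w ≠ t ∧ ∀ xi xj xk, IndepOf (fun y => f xi xj xk (Function.update y t (y u))) w)
    (H5 : (∀ xj y, f false xj (y t) y = f true xj (y t) y) ∨
      (∀ xi y, f xi false (y t) y = f xi true (y t) y) ∨
      ∃ w, ∀ xi xj, IndepOf (fun y => f xi xj (y t) y) w)
    (a1 : ∀ xi xj, IndepOf (f xi xj xi) t)
    (a2 : ∀ xi xj, IndepOf (f xi xj xj) u) : False := by
  have b1 : f false false true = f false false false := funext (h0 false true)
  have b2 : f true true true = f true true false := funext (h0 true true)
  have t1 := a1 false false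
  have t2 := a1 false true
  have t3 := a1 true false
  have t4 := a1 true true
  have u1 := a2 false false
  have u2 := a2 false true
  have u3 := a2 true false
  have u4 := a2 true true
  have htu : t ≠ u := by
    rintro rfl
    apply Et t
    intro xi xj xk
    cases xi <;> cases xj <;> cases xk <;> simp_all
  rcases H4 htu with h | h | h | ⟨w, hwt, h⟩
  · apply Ei
    intro xj xk
    apply indep_eq htu _ (h xj xk)
    cases xj <;> cases xk <;> simp_all
  · apply Ej
    intro xi xk
    apply indep_eq htu _ (h xi xk)
    cases xi <;> cases xk <;> simp_all
  · have e : ∀ xi xj y, y t = y u → f xi xj false y = f xi xj true y := by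
      intro xi xj y hy
      have := h xi xj y
      rwa [← hy, Function.update_eq_self] at this
    rcases H5 with h5 | h5 | ⟨w, h5⟩
    · apply Ei
      have k1 := indep_four (φ := f true false false) (ψ := f true false true)
        (γ := f false false false) htu false u3 t3 t1 u1 (e _ _)
        (by intro y hy; have := h5 false y; rw [hy] at this; exact this.symm)
        (by intro y hy; have := h5 false y; rw [hy] at this; simp only [Bool.not_false, b1] at this; exact this.symm)
      have k2 := indep_four (φ := f false true true) (ψ := f false true false)
        (γ := f true true true) htu true u2 t2 t4 u4 (fun y hy => (e _ _ y hy).symm)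
        (by intro y hy; have := h5 true y; rw [hy] at this; exact this)
        (by intro y hy; have := h5 true y; rw [hy] at this; simp only [Bool.not_true, ← b2] at this; exact this)
      intro xj xk y
      have := k1 y; have := k2 y
      cases xj <;> cases xk <;> simp_all
    · apply Ej
      have k1 := indep_four (φ := f true false false) (ψ := f true false true)
        (γ := f true true true) htu false u3 t3 t4 u4 (e _ _)
        (by intro y hy; have := h5 true y; rw [hy] at this; rw [b2]; exact this)
        (by intro y hy; have := h5 true y; rw [hy] at this; exact this)
      have k2 := indep_four (φ := f false true true) (ψ := f false true false)
        (γ := f false false false) htu true u2 t2 t1 u1 (fun y hy => (e _ _ y hy).symm)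
        (by intro y hy; have := h5 false y; rw [hy, b1] at this; exact this.symm)
        (by intro y hy; have := h5 false y; rw [hy] at this; exact this.symm)
      intro xi xk y
      have := k1 y; have := k2 y
      cases xi <;> cases xk <;> simp_all
    · have e1 : IndepOf (fun y => if y t = false then f true false false y
          else f true false true y) w := by
        have := h5 true false
        convert this using 2 with y
        cases y t <;> simp
      have e2 : IndepOf (fun y => if y t = true then f false true true y
          else f false true false y) w := by
        have := h5 false true
        convert this using 2 with y
        cases y t <;> simp
      have e' : ∀ y, y t = y u → f false true true y = f false true false y :=
        fun y hy => (e _ _ y hy).symm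
      by_cases hw : w = t ∨ w = u
      · apply Et t
        have k1 := indep_five htu false u3 t3 (e _ _) e1 hw
        have k2 := indep_five htu true u2 t2 e' e2 hw
        intro xi xj xk
        cases xi <;> cases xj <;> cases xk <;> grind
      · push Not at hw
        apply Et w
        have k1 := indep_six htu false u3 t3 (e _ _) e1 hw.1
        have k2 := indep_six htu true u2 t2 e' e2 hw.1
        have k3 := k1.2 hw.2
        have k4 := k2.2 hw.2
        have g0 : IndepOf (f false false false) w := by
          intro y v
          have := h5 false false y v
          simp only [Function.update_of_ne (Ne.symm hw.1)] at this
          rwa [h0, h0 _ (y t)] at this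
        have g1 : IndepOf (f true true true) w := by
          intro y v
          have := h5 true true y v
          simp only [Function.update_of_ne (Ne.symm hw.1)] at this
          rwa [h0, h0 _ (y t), ← b2] at this
        intro xi xj xk
        cases xi <;> cases xj <;> cases xk <;> grind
  · by_cases hwu : w = u
    · subst hwu
      apply Et t
      have k1 := indep_two htu u3 (h _ _ _)
      have k2 := indep_two htu u2 (h _ _ _)
      intro xi xj xk
      cases xi <;> cases xj <;> cases xk <;> grind
    · apply Et w
      intro xi xj xk
      apply indep_three htu hwt hwu _ (h xi xj xk)
      cases xi <;> cases xj <;> cases xk <;> grind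

theorem core {f : Bool → Bool → Bool → (Y → Bool) → Bool}
    (h0 : ∀ x k y, f x x k y = f x x false y)
    (Ei : ¬ ∀ xj xk y, f false xj xk y = f true xj xk y)
    (Ej : ¬ ∀ xi xk y, f xi false xk y = f xi true xk y)
    (Ek : ¬ ∀ xi xj y, f xi xj false y = f xi xj true y)
    (Et : ∀ t, ¬ ∀ xi xj xk, IndepOf (f xi xj xk) t)
    (H1 : (∀ xj y, f false xj false y = f true xj true y) ∨
      (∀ xi y, f xi false xi y = f xi true xi y) ∨
      ∃ w, ∀ xi xj, IndepOf (f xi xj xi) w)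
    (H2 : (∀ xj y, f false xj xj y = f true xj xj y) ∨
      (∀ xi y, f xi false false y = f xi true true y) ∨
      ∃ w, ∀ xi xj, IndepOf (f xi xj xj) w)
    (H3 : ∀ t, (∀ xk y, f (y t) false xk y = f (y t) true xk y) ∨
      (∀ xj y, f (y t) xj false y = f (y t) xj true y) ∨
      ∃ w, ∀ xj xk, IndepOf (fun y => f (y t) xj xk y) w)
    (H4 : ∀ t u, t ≠ u → (∀ xj xk y, f false xj xk (Function.update y t (y u)) = f true xj xk (Function.update y t (y u))) ∨
      (∀ xi xk y, f xi false xk (Function.update y t (y u)) = f xi true xk (Function.update y t (y u))) ∨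
      (∀ xi xj y, f xi xj false (Function.update y t (y u)) = f xi xj true (Function.update y t (y u))) ∨
      ∃ w, w ≠ t ∧ ∀ xi xj xk, IndepOf (fun y => f xi xj xk (Function.update y t (y u))) w)
    (H5 : ∀ t, (∀ xj y, f false xj (y t) y = f true xj (y t) y) ∨
      (∀ xi y, f xi false (y t) y = f xi true (y t) y) ∨
      ∃ w, ∀ xi xj, IndepOf (fun y => f xi xj (y t) y) w) :
    IsEmpty Y ∧ ((∀ xi xj xk y, f xi xj xk y =
        if (xi && xj) ^^ (xi && xk) ^^ (xj && xk) then f true true true y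
          else f false false false y) ∨
      (∀ xi xj xk y, f xi xj xk y =
        if (xi && xj) ^^ (xi && !xk) ^^ (xj && !xk) then f true true true y
          else f false false false y)) := by
  have b1 := h0 false true
  have b2 := h0 true true
  rcases H1 with h1 | h1 | ⟨t, h1⟩ <;> rcases H2 with h2 | h2 | ⟨u, h2⟩
  · exfalso
    apply Ei
    intro xj xk y
    have := h1 false y; have := h1 true y; have := h2 false y; have := h2 true y
    have := b1 y; have := b2 y
    cases xj <;> cases xk <;> grind only
  · refine ⟨⟨fun t => core_sel h0 Ei Et H3 (h1 false) (h1 true) (h2 false) (h2 true) t⟩, Or.inr ?_⟩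
    intro xi xj xk y
    have := h1 false y; have := h1 true y; have := h2 false y; have := h2 true y
    have := b1 y; have := b2 y
    cases xi <;> cases xj <;> cases xk <;> grind only
  · exfalso
    apply Et u
    intro xi xj xk y v
    have := h2 xi xj y v
    have := h2 false false y v
    have := h2 true true y v
    have := h1 false y; have := h1 true y
    have := b1 y; have := b2 y
    generalize Function.update y u v = z at *
    have := h1 false z; have := h1 true z
    have := b1 z; have := b2 z
    cases xi <;> cases xj <;> cases xk <;> grind only
  · refine ⟨⟨fun t => core_sel (f := fun a b c => f a b (!c)) ?_ ?_ ?_ ?_ ?_ ?_ ?_ ?_ t⟩, Or.inl ?_⟩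
    · intro x k y
      rw [h0, h0 x (!false)]
    · intro h
      apply Ei
      intro xj xk y
      simpa using h xj (!xk) y
    · intro t h
      apply Et t
      intro xi xj xk
      simpa using h xi xj (!xk)
    · intro t
      rcases H3 t with h | h | ⟨w, h⟩
      · exact Or.inl fun xk y => h (!xk) y
      · exact Or.inr (Or.inl fun xk y => (h xk y).symm)
      · exact Or.inr (Or.inr ⟨w, fun xj xk => h xj (!xk)⟩)
    · intro y
      have := h1 false y; have := h1 true y; have := h2 false y; have := h2 true y
      have := b1 y; have := b2 y
      grind only
    · intro y
      have := h1 false y; have := h1 true y; have := h2 false y; have := h2 true y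
      have := b1 y; have := b2 y
      grind only
    · intro y
      have := h1 false y; have := h1 true y; have := h2 false y; have := h2 true y
      have := b1 y; have := b2 y
      grind only
    · intro y
      have := h1 false y; have := h1 true y; have := h2 false y; have := h2 true y
      have := b1 y; have := b2 y
      grind only
    intro xi xj xk y
    have := h1 false y; have := h1 true y; have := h2 false y; have := h2 true y
    have := b1 y; have := b2 y
    cases xi <;> cases xj <;> cases xk <;> grind only
  · exfalso
    apply Ek
    intro xi xj y
    have := h1 false y; have := h1 true y; have := h2 false y; have := h2 true y
    have := b1 y; have := b2 y
    cases xi <;> cases xj <;> grind only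
  · exfalso
    apply Et u
    intro xi xj xk y v
    have := h2 xi xj y v
    have := h2 false false y v
    have := h2 true true y v
    have := h2 false true y v
    have := h2 true false y v
    have := h1 false y; have := h1 true y
    have := b1 y; have := b2 y
    generalize Function.update y u v = z at *
    have := h1 false z; have := h1 true z
    have := b1 z; have := b2 z
    cases xi <;> cases xj <;> cases xk <;> grind only
  · exfalso
    apply Et t
    intro xi xj xk y v
    have := h1 xi xj y v
    have := h1 false false y v
    have := h1 true true y v
    have := h2 false y; have := h2 true y
    have := b1 y; have := b2 y
    generalize Function.update y t v = z at *
    have := h2 false z; have := h2 true z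
    have := b1 z; have := b2 z
    cases xi <;> cases xj <;> cases xk <;> grind only
  · exfalso
    apply Et t
    intro xi xj xk y v
    have := h1 xi xj y v
    have := h1 false false y v
    have := h1 true true y v
    have := h2 false y; have := h2 true y
    have := b1 y; have := b2 y
    generalize Function.update y t v = z at *
    have := h2 false z; have := h2 true z
    have := b1 z; have := b2 z
    cases xi <;> cases xj <;> cases xk <;> grind only
  · exact (core_tu h0 Ei Ej Et (H4 t u) (H5 t) h1 h2).elim

end Core

/-! ### Minors and essential variables -/

theorem Minor.refl' (f : BF) : Minor f f := ⟨id, fun _ => rfl⟩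

theorem Minor.trans' {f g h : BF} (h1 : Minor f g) (h2 : Minor g h) : Minor f h := by
  obtain ⟨σ, hσ⟩ := h1
  obtain ⟨τ, hτ⟩ := h2
  exact ⟨σ ∘ τ, fun a => by rw [hσ, hτ]; rfl⟩

theorem EquivBF.refl' (f : BF) : EquivBF f f := ⟨Minor.refl' f, Minor.refl' f⟩

theorem EquivBF.symm' {f g : BF} (h : EquivBF f g) : EquivBF g f := ⟨h.2, h.1⟩

theorem EquivBF.trans' {f g h : BF} (h1 : EquivBF f g) (h2 : EquivBF g h) : EquivBF f h :=
  ⟨h1.1.trans' h2.1, h2.2.trans' h1.2⟩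

theorem not_essential_iff {n : ℕ} {f : (Fin n → Bool) → Bool} {i : Fin n} :
    ¬ Essential f i ↔ IndepOf f i := by
  constructor
  · intro h y v
    by_contra hne
    exact h ⟨_, _, fun j hj => Function.update_of_ne hj _ _, hne⟩
  · rintro h ⟨a, b, hab, hne⟩
    apply hne
    have : b = Function.update a i (b i) := by
      funext j
      by_cases hj : j = i
      · subst hj; simp
      · simp [hj, hab j hj]
    rw [this, h]

theorem eq_of_agree {n : ℕ} {f : (Fin n → Bool) → Bool} {a b : Fin n → Bool}
    (h : ∀ i, Essential f i → a i = b i) : f a = f b := by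
  have key : ∀ S : Finset (Fin n), f (fun i => if i ∈ S then b i else a i) = f a := by
    intro S
    induction S using Finset.induction_on with
    | empty => simp
    | insert i S hi ih =>
      rw [← ih]
      by_cases hE : Essential f i
      · congr 1
        funext j
        by_cases hj : j = i
        · subst hj; simp [hi, h j hE]
        · simp [hj]
      · rw [← not_essential_iff.1 hE (fun j => if j ∈ S then b j else a j) (b i)]
        congr 1
        funext j
        by_cases hj : j = i
        · subst hj; simp
        · simp [hj]
  simpa using (key Finset.univ).symm

theorem minor_ess {n m : ℕ} {g : (Fin n → Bool) → Bool} {f : (Fin m → Bool) → Bool}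
    {σ : Fin m → Fin n} (h : ∀ a, g a = f (a ∘ σ)) {j : Fin n} (hj : Essential g j) :
    ∃ i, Essential f i ∧ σ i = j := by
  obtain ⟨a, b, hab, hne⟩ := hj
  by_contra hcon
  push Not at hcon
  apply hne
  rw [h, h]
  apply eq_of_agree
  intro i hi
  exact hab _ (hcon i hi)

theorem essArity_mono {g f : BF} (h : Minor g f) : essArity g.2 ≤ essArity f.2 := by
  obtain ⟨σ, hσ⟩ := h
  choose φ h1 h2 using fun j : {j // Essential g.2 j} => minor_ess hσ j.2
  apply Nat.card_le_card_of_injective (fun j => (⟨φ j, h1 j⟩ : {i // Essential f.2 i}))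
  intro x y hxy
  simp only [Subtype.mk.injEq] at hxy
  apply Subtype.ext
  rw [← h2 x, ← h2 y, hxy]

theorem essArity_congr {g f : BF} (h : EquivBF g f) : essArity g.2 = essArity f.2 :=
  le_antisymm (essArity_mono h.1) (essArity_mono h.2)

theorem gapBF_congr {f g : BF} (h : EquivBF f g) : gapBF f = gapBF g := by
  unfold gapBF
  rw [essArity_congr h]
  congr 1
  ext d
  constructor
  · rintro ⟨k, ⟨h1, h2⟩, hd⟩
    exact ⟨k, ⟨h1.trans' h.1, fun h3 => h2 (h.1.trans' h3)⟩, hd⟩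
  · rintro ⟨k, ⟨h1, h2⟩, hd⟩
    exact ⟨k, ⟨h1.trans' h.2, fun h3 => h2 (h.2.trans' h3)⟩, hd⟩

theorem exists_reduced (f : BF) (h2 : 2 ≤ essArity f.2) :
    ∃ f' : BF, EquivBF f f' ∧ ∀ i, Essential f'.2 i := by
  obtain ⟨n, f⟩ := f
  let e : {i : Fin n // Essential f i} ≃ Fin (essArity f) := Finite.equivFin _
  have hpos : 0 < essArity f := by simp only at h2; omega
  classical
  let τ : Fin n → Fin (essArity f) := fun i => if h : Essential f i then e ⟨i, h⟩ else ⟨0, hpos⟩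
  have hτ : ∀ i (h : Essential f i), τ i = e ⟨i, h⟩ := fun i h => by simp [τ, h]
  have hm : ∀ a, f a = f ((a ∘ fun j => (e.symm j : Fin n)) ∘ τ) := by
    intro a
    apply eq_of_agree
    intro i hi
    simp [hτ i hi]
  refine ⟨⟨essArity f, fun a => f (a ∘ τ)⟩, ⟨⟨fun j => (e.symm j : Fin n), hm⟩, ⟨τ, fun a => rfl⟩⟩, ?_⟩
  intro j
  obtain ⟨i, hi, hij⟩ := minor_ess (g := f) (f := fun a => f (a ∘ τ))
    (σ := fun j => (e.symm j : Fin n)) hm (e.symm j).2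
  have : i = j := by
    apply e.symm.injective
    exact Subtype.ext hij
  exact this ▸ hi

theorem essArity_reduced {n : ℕ} {f : (Fin n → Bool) → Bool} (h : ∀ i, Essential f i) :
    essArity f = n := by
  unfold essArity
  rw [Nat.card_congr (Equiv.subtypeUnivEquiv h)]
  simp

theorem minor_of_inj {n m : ℕ} (hm : 0 < m) {g : (Fin n → Bool) → Bool} {f : (Fin m → Bool) → Bool}
    {σ : Fin m → Fin n} (h : ∀ a, g a = f (a ∘ σ)) (hσ : Function.Injective σ) :
    Minor ⟨m, f⟩ ⟨n, g⟩ := by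
  have : Nonempty (Fin m) := ⟨⟨0, hm⟩⟩
  refine ⟨Function.invFun σ, fun a => ?_⟩
  simp only
  rw [h]
  congr 1
  funext i
  simp [Function.leftInverse_invFun hσ i]

theorem strict_lt {n m : ℕ} (hm : 0 < m) {g : (Fin n → Bool) → Bool} {f : (Fin m → Bool) → Bool}
    (hf : ∀ i, Essential f i) (h : StrictMinor ⟨n, g⟩ ⟨m, f⟩) : essArity g < m := by
  have h1 := essArity_mono h.1
  simp only [essArity_reduced hf] at h1
  refine lt_of_le_of_ne h1 ?_
  intro heq
  obtain ⟨⟨σ, hσ⟩, h2⟩ := h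
  apply h2
  refine minor_of_inj hm hσ ?_
  choose φ h3 h4 using fun j : {j // Essential g j} => minor_ess hσ j.2
  have hinj : Function.Injective φ := by
    intro x y hxy
    apply Subtype.ext
    rw [← h4 x, ← h4 y, hxy]
  have hbij : Function.Bijective φ := by
    rw [Nat.bijective_iff_injective_and_card]
    refine ⟨hinj, ?_⟩
    simp only [Nat.card_fin]
    exact heq
  intro x y hxy
  obtain ⟨x', rfl⟩ := hbij.2 x
  obtain ⟨y', rfl⟩ := hbij.2 y
  have : x' = y' := Subtype.ext ((h4 x').symm.trans (hxy.trans (h4 y')))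
  rw [this]

/-- Identification minor: replace `x_i` by `x_j`. -/
def ident {n : ℕ} (f : (Fin n → Bool) → Bool) (i j : Fin n) : (Fin n → Bool) → Bool :=
  fun a => f (Function.update a i (a j))

theorem ident_minor {n : ℕ} (f : (Fin n → Bool) → Bool) (i j : Fin n) :
    Minor ⟨n, ident f i j⟩ ⟨n, f⟩ := by
  refine ⟨Function.update id i j, fun a => ?_⟩
  simp only [ident]
  congr 1
  funext k
  by_cases hk : k = i
  · subst hk; simp
  · simp [hk]

theorem ident_indep {n : ℕ} (f : (Fin n → Bool) → Bool) {i j : Fin n} (hij : i ≠ j) :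
    IndepOf (ident f i j) i := by
  intro a v
  simp [ident, Ne.symm hij]

theorem essArity_le_sub_one {n : ℕ} {f : (Fin n → Bool) → Bool} {i : Fin n} (hi : IndepOf f i) :
    essArity f ≤ n - 1 := by
  classical
  unfold essArity
  rw [Nat.card_eq_fintype_card, Fintype.card_subtype]
  calc _ ≤ (Finset.univ.erase i).card := by
        apply Finset.card_le_card
        intro k hk
        simp only [Finset.mem_filter, Finset.mem_univ, true_and] at hk
        simp only [Finset.mem_erase, Finset.mem_univ, and_true]
        rintro rfl
        exact not_essential_iff.2 hi hk
    _ = n - 1 := by simp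

theorem essArity_le_sub_two {n : ℕ} {f : (Fin n → Bool) → Bool} {i k : Fin n} (hik : k ≠ i)
    (hi : IndepOf f i) (hk : IndepOf f k) :
    essArity f ≤ n - 2 := by
  classical
  unfold essArity
  rw [Nat.card_eq_fintype_card, Fintype.card_subtype]
  calc _ ≤ ((Finset.univ.erase i).erase k).card := by
        apply Finset.card_le_card
        intro l hl
        simp only [Finset.mem_filter, Finset.mem_univ, true_and] at hl
        simp only [Finset.mem_erase, Finset.mem_univ, and_true]
        constructor
        · rintro rfl
          exact not_essential_iff.2 hk hl
        · rintro rfl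
          exact not_essential_iff.2 hi hl
    _ = n - 2 := by
      rw [Finset.card_erase_of_mem (by simp [hik]), Finset.card_erase_of_mem (by simp)]
      simp; omega

theorem le_essArity {n : ℕ} {f : (Fin n → Bool) → Bool} (S : Finset (Fin n))
    (h : ∀ i ∈ S, Essential f i) : S.card ≤ essArity f := by
  classical
  unfold essArity
  rw [Nat.card_eq_fintype_card, Fintype.card_subtype]
  apply Finset.card_le_card
  intro k hk
  simp [h k hk]

theorem ident_strict {n : ℕ} (hn : 0 < n) {f : (Fin n → Bool) → Bool} (hf : ∀ i, Essential f i)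
    {i j : Fin n} (hij : i ≠ j) : StrictMinor ⟨n, ident f i j⟩ ⟨n, f⟩ := by
  refine ⟨ident_minor f i j, fun h => ?_⟩
  have h1 := essArity_mono h
  have h2 := essArity_le_sub_one (ident_indep f hij)
  simp only [essArity_reduced hf] at h1
  omega

theorem strict_ident {n m : ℕ} (hm : 0 < m) {g : (Fin n → Bool) → Bool} {f : (Fin m → Bool) → Bool}
    (h : StrictMinor ⟨n, g⟩ ⟨m, f⟩) :
    ∃ i j, i ≠ j ∧ Minor ⟨n, g⟩ ⟨m, ident f i j⟩ := by
  obtain ⟨⟨σ, hσ⟩, h2⟩ := h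
  have hni : ¬ Function.Injective σ := fun hi => h2 (minor_of_inj hm hσ hi)
  simp only [Function.Injective] at hni
  push Not at hni
  obtain ⟨i, j, hij, hne⟩ := hni
  refine ⟨i, j, hne, σ, fun a => ?_⟩
  refine (hσ a).trans ?_
  simp only [ident]
  congr 1
  funext k
  by_cases hk : k = i
  · subst hk; simp [hij]
  · simp [hk]

/-- Every identification loses a second variable. -/
def LoseTwo {n : ℕ} (f : (Fin n → Bool) → Bool) : Prop :=
  ∀ i j, i ≠ j → ∃ k, k ≠ i ∧ IndepOf (ident f i j) k

theorem gap_pos_le {n : ℕ} (hn : 2 ≤ n) {f : (Fin n → Bool) → Bool} (hf : ∀ i, Essential f i) :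
    gapBF ⟨n, f⟩ = 1 ∨ LoseTwo f := by
  by_contra hcon
  push Not at hcon
  obtain ⟨h1, h2⟩ := hcon
  apply h1
  simp only [LoseTwo] at h2
  push Not at h2
  obtain ⟨i, j, hij, hk⟩ := h2
  have hs := ident_strict (by omega) hf hij
  have e1 := essArity_le_sub_one (ident_indep f hij)
  have e2 := le_essArity (f := ident f i j) (Finset.univ.erase i) (by
    intro k hk'
    by_contra hne
    exact hk k (by simpa using hk') (not_essential_iff.1 hne))
  rw [Finset.card_erase_of_mem (by simp), Finset.card_fin] at e2
  unfold gapBF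
  simp only [essArity_reduced hf]
  apply le_antisymm
  · apply Nat.sInf_le
    exact ⟨_, hs, by simp only; omega⟩
  · refine le_csInf ⟨_, ⟨_, hs, rfl⟩⟩ ?_
    rintro d ⟨⟨m, g⟩, hg, rfl⟩
    have := strict_lt (by omega) hf hg
    simp only; omega

theorem gap_two {n : ℕ} (hn : 2 ≤ n) {f : (Fin n → Bool) → Bool} (hf : ∀ i, Essential f i)
    (hl : LoseTwo f) {i j : Fin n} (hij : i ≠ j) (h : n - 2 ≤ essArity (ident f i j)) :
    gapBF ⟨n, f⟩ = 2 := by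
  have hs := ident_strict (by omega) hf hij
  have key : ∀ i j, i ≠ j → essArity (ident f i j) ≤ n - 2 := by
    intro i j hij
    obtain ⟨k, hk, hk'⟩ := hl i j hij
    exact essArity_le_sub_two hk (ident_indep f hij) hk'
  unfold gapBF
  simp only [essArity_reduced hf]
  apply le_antisymm
  · apply Nat.sInf_le
    exact ⟨_, hs, by simp only; have := key i j hij; omega⟩
  · refine le_csInf ⟨_, ⟨_, hs, rfl⟩⟩ ?_
    rintro d ⟨⟨m, g⟩, hg, rfl⟩
    obtain ⟨i, j, hij, hm⟩ := strict_ident (by omega) hg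
    have := key i j hij
    have h' := essArity_mono hm
    simp only at h' ⊢; omega

theorem equiv_of_bij {n m : ℕ} {g : (Fin n → Bool) → Bool} {f : (Fin m → Bool) → Bool}
    {σ : Fin m → Fin n} (h : ∀ a, g a = f (a ∘ σ)) (hσ : Function.Bijective σ) :
    EquivBF ⟨n, g⟩ ⟨m, f⟩ := by
  obtain ⟨τ, h1, h2⟩ := Function.bijective_iff_has_inverse.1 hσ
  refine ⟨⟨σ, h⟩, τ, fun a => ?_⟩
  simp only
  rw [h]
  congr 1
  funext i
  simp [h1 i]

/-! ### The listed functions -/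

theorem fH_E1 (m : ℕ) (c : Bool) (a : Fin m → Bool) :
    fH (gapE1 m c) a = (decide (Odd (Finset.univ.filter fun i => a i = true).card) ^^ c) := by
  have h1 : ((Finset.univ.image fun i : Fin m => ({i} : Finset (Fin m))).filter
      (fun E => ∀ i ∈ E, a i = true)) =
      (Finset.univ.filter fun i => a i = true).image (fun i : Fin m => ({i} : Finset (Fin m))) := by
    ext E
    simp only [Finset.mem_filter, Finset.mem_image, Finset.mem_univ, true_and]
    constructor
    · rintro ⟨⟨i, rfl⟩, h⟩
      exact ⟨i, h i (by simp), rfl⟩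
    · rintro ⟨i, h, rfl⟩
      exact ⟨⟨i, rfl⟩, by simpa using h⟩
  have h2 : ((Finset.univ.filter fun i => a i = true).image
      (fun i : Fin m => ({i} : Finset (Fin m)))).card
      = (Finset.univ.filter fun i => a i = true).card :=
    Finset.card_image_of_injective _ Finset.singleton_injective
  unfold fH gapE1
  rw [Finset.filter_union, h1]
  cases c
  · simp [cEdges, h2]
  · rw [Finset.card_union_of_disjoint, h2]
    · simp only [cEdges, if_true]
      have h3 : (({∅} : Finset (Finset (Fin m))).filter (fun E => ∀ i ∈ E, a i = true)) = {∅} :=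
        Finset.filter_true_of_mem (by simp)
      rw [h3]
      simp only [Finset.card_singleton, Nat.odd_add_one, decide_not, Bool.xor_true]
    · rw [Finset.disjoint_left]
      intro E hE
      simp only [Finset.mem_image] at hE
      obtain ⟨i, -, rfl⟩ := hE
      simp [cEdges]

theorem fH_E2 (c : Bool) (a : Fin 2 → Bool) :
    fH (gapE2 c) a = ((a 0 && a 1) ^^ a 0 ^^ c) := by
  revert c a; decide

theorem fH_E3 (c : Bool) (a : Fin 3 → Bool) :
    fH (gapE3 c) a = ((a 0 && a 1) ^^ (a 0 && a 2) ^^ (a 1 && a 2) ^^ c) := by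
  revert c a; decide

theorem fH_E4 (c : Bool) (a : Fin 3 → Bool) :
    fH (gapE4 c) a = ((a 0 && a 1) ^^ (a 0 && a 2) ^^ (a 1 && a 2) ^^ a 0 ^^ a 1 ^^ c) := by
  revert c a; decide

/-! ### Transfer to the core -/

section Transfer
variable {n : ℕ}

def mk3 (i j k : Fin n) (xi xj xk : Bool) (y : {v : Fin n // v ≠ i ∧ v ≠ j ∧ v ≠ k} → Bool) :
    Fin n → Bool :=
  fun v => if h : v ≠ i ∧ v ≠ j ∧ v ≠ k then y ⟨v, h⟩ else
    if v = i then xi else if v = j then xj else xk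

variable {i j k : Fin n} (xi xj xk v : Bool) (y : {v : Fin n // v ≠ i ∧ v ≠ j ∧ v ≠ k} → Bool)
  (t : {v : Fin n // v ≠ i ∧ v ≠ j ∧ v ≠ k})

theorem mk3_i : mk3 i j k xi xj xk y i = xi := by simp [mk3]

theorem mk3_j (hij : i ≠ j) : mk3 i j k xi xj xk y j = xj := by simp [mk3, hij.symm]

theorem mk3_k (hki : k ≠ i) (hkj : k ≠ j) : mk3 i j k xi xj xk y k = xk := by simp [mk3, hki, hkj]

theorem mk3_t : mk3 i j k xi xj xk y t = y t := by
  have := t.2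
  simp [mk3, this]

theorem mk3_upd_i : Function.update (mk3 i j k xi xj xk y) i v = mk3 i j k v xj xk y := by
  funext w
  by_cases hw : w = i
  · subst hw; simp [mk3]
  · simp [hw, mk3]

theorem mk3_upd_j (hij : i ≠ j) :
    Function.update (mk3 i j k xi xj xk y) j v = mk3 i j k xi v xk y := by
  funext w
  by_cases hw : w = j
  · subst hw; simp [mk3, hij.symm]
  · simp [hw, mk3]

theorem mk3_upd_k (hki : k ≠ i) (hkj : k ≠ j) :
    Function.update (mk3 i j k xi xj xk y) k v = mk3 i j k xi xj v y := by
  funext w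
  by_cases hw : w = k
  · subst hw; simp [mk3, hki, hkj]
  · rw [Function.update_of_ne hw]
    by_cases h : w ≠ i ∧ w ≠ j ∧ w ≠ k
    · simp only [mk3, dif_pos h]
    · simp only [mk3, dif_neg h]
      split_ifs <;> tauto

theorem mk3_upd_t :
    Function.update (mk3 i j k xi xj xk y) t v = mk3 i j k xi xj xk (Function.update y t v) := by
  funext w
  by_cases hw : w = t
  · subst hw
    simp [mk3_t]
  · rw [Function.update_of_ne hw]
    by_cases h : w ≠ i ∧ w ≠ j ∧ w ≠ k
    · have : (⟨w, h⟩ : {v : Fin n // v ≠ i ∧ v ≠ j ∧ v ≠ k}) ≠ t := by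
        rintro rfl; exact hw rfl
      simp only [mk3, dif_pos h, Function.update_of_ne this]
    · simp only [mk3, dif_neg h]

theorem mk3_surj (a : Fin n → Bool) : mk3 i j k (a i) (a j) (a k) (fun v => a v) = a := by
  funext w
  by_cases h : w ≠ i ∧ w ≠ j ∧ w ≠ k
  · simp only [mk3, dif_pos h]
  · simp only [mk3, dif_neg h]
    split_ifs with h1 h2
    · rw [h1]
    · rw [h2]
    · have : w = k := by tauto
      rw [this]

theorem bool_all {g : Bool → Bool} (h : g false = g true) (x y : Bool) : g x = g y := by
  cases x <;> cases y <;> simp [h]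

theorem indep_i (F : (Fin n → Bool) → Bool) : IndepOf F i ↔
    ∀ xj xk y, F (mk3 i j k false xj xk y) = F (mk3 i j k true xj xk y) := by
  constructor
  · intro h xj xk y
    rw [← mk3_upd_i true xj xk false y, h]
  · intro h a v
    rw [← mk3_surj (i := i) (j := j) (k := k) a, mk3_upd_i]
    exact bool_all (g := fun x => F (mk3 i j k x _ _ _)) (h _ _ _) _ _

theorem indep_j (hij : i ≠ j) (F : (Fin n → Bool) → Bool) : IndepOf F j ↔
    ∀ xi xk y, F (mk3 i j k xi false xk y) = F (mk3 i j k xi true xk y) := by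
  constructor
  · intro h xj xk y
    rw [← mk3_upd_j xj true xk false y hij, h]
  · intro h a v
    rw [← mk3_surj (i := i) (j := j) (k := k) a, mk3_upd_j _ _ _ _ _ hij]
    exact bool_all (g := fun x => F (mk3 i j k _ x _ _)) (h _ _ _) _ _

theorem indep_k (hki : k ≠ i) (hkj : k ≠ j) (F : (Fin n → Bool) → Bool) : IndepOf F k ↔
    ∀ xi xj y, F (mk3 i j k xi xj false y) = F (mk3 i j k xi xj true y) := by
  constructor
  · intro h xi xj y
    rw [← mk3_upd_k xi xj true false y hki hkj, h]
  · intro h a v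
    rw [← mk3_surj (i := i) (j := j) (k := k) a, mk3_upd_k _ _ _ _ _ hki hkj]
    exact bool_all (g := fun x => F (mk3 i j k _ _ x _)) (h _ _ _) _ _

theorem indep_t (F : (Fin n → Bool) → Bool) : IndepOf F (t : Fin n) ↔
    ∀ xi xj xk, IndepOf (fun y => F (mk3 i j k xi xj xk y)) t := by
  constructor
  · intro h xi xj xk y v
    simp only
    rw [← mk3_upd_t, h]
  · intro h a v
    rw [← mk3_surj (i := i) (j := j) (k := k) a, mk3_upd_t]
    exact h _ _ _ _ _

theorem index_cases (i j k w : Fin n) : w = i ∨ w = j ∨ w = k ∨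
    ∃ t : {v : Fin n // v ≠ i ∧ v ≠ j ∧ v ≠ k}, w = t := by
  by_cases h : w ≠ i ∧ w ≠ j ∧ w ≠ k
  · exact Or.inr (Or.inr (Or.inr ⟨⟨w, h⟩, rfl⟩))
  · tauto

theorem classify3 {f : (Fin n → Bool) → Bool} (hf : ∀ i, Essential f i) (hl : LoseTwo f)
    (hij : i ≠ j) (hki : k ≠ i) (hkj : k ≠ j) (hk : IndepOf (ident f i j) k) :
    (∀ v, v = i ∨ v = j ∨ v = k) ∧
    ((∀ a, f a = if (a i && a j) ^^ (a i && a k) ^^ (a j && a k) then f (fun _ => true)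
        else f (fun _ => false)) ∨
     (∀ a, f a = if (a i && a j) ^^ (a i && !a k) ^^ (a j && !a k) then f (fun _ => true)
        else f (fun _ => false))) := by
  have hE : ∀ i, ¬ IndepOf f i := fun i h => not_essential_iff.2 h (hf i)
  have main := core (f := fun xi xj xk y => f (mk3 i j k xi xj xk y)) ?_ ?_ ?_ ?_ ?_ ?_ ?_ ?_ ?_ ?_
  · obtain ⟨hY, h⟩ := main
    have hall : ∀ v, v = i ∨ v = j ∨ v = k := by
      intro v
      rcases index_cases i j k v with h | h | h | ⟨t, -⟩
      · exact Or.inl h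
      · exact Or.inr (Or.inl h)
      · exact Or.inr (Or.inr h)
      · exact hY.elim t
    have hc : ∀ x y, mk3 i j k x x x y = fun _ => x := by
      intro x y
      funext v
      rcases hall v with h | h | h <;> subst h <;> simp [mk3]
    refine ⟨hall, ?_⟩
    simp only [hc] at h
    rcases h with h | h
    · left
      intro a
      conv_lhs => rw [← mk3_surj (i := i) (j := j) (k := k) a]
      rw [h]
    · right
      intro a
      conv_lhs => rw [← mk3_surj (i := i) (j := j) (k := k) a]
      rw [h]
  · -- h0
    have := (indep_k hki hkj _).1 hk
    simp only [ident, mk3_j _ _ _ _ hij, mk3_upd_i] at this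
    intro x k y
    have := this x x y
    cases k <;> simp [this]
  · exact fun h => hE i ((indep_i f).2 h)
  · exact fun h => hE j ((indep_j hij f).2 h)
  · exact fun h => hE k ((indep_k hki hkj f).2 h)
  · exact fun t h => hE t ((indep_t t f).2 h)
  · -- H1
    obtain ⟨w, hw, h⟩ := hl k i hki
    rcases index_cases i j k w with rfl | rfl | rfl | ⟨t, rfl⟩
    · have := (indep_i (j := j) (k := k) _).1 h
      simp only [ident, mk3_i, mk3_upd_k _ _ _ _ _ hki hkj] at this
      exact Or.inl fun xj y => this xj false y
    · have := (indep_j (k := k) hij _).1 h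
      simp only [ident, mk3_i, mk3_upd_k _ _ _ _ _ hki hkj] at this
      exact Or.inr (Or.inl fun xj y => this xj false y)
    · exact absurd rfl hw
    · have := (indep_t t _).1 h
      simp only [ident, mk3_i, mk3_upd_k _ _ _ _ _ hki hkj] at this
      exact Or.inr (Or.inr ⟨t, fun xi xj => this xi xj false⟩)
  · -- H2
    obtain ⟨w, hw, h⟩ := hl k j hkj
    rcases index_cases i j k w with rfl | rfl | rfl | ⟨t, rfl⟩
    · have := (indep_i (j := j) (k := k) _).1 h
      simp only [ident, mk3_j _ _ _ _ hij, mk3_upd_k _ _ _ _ _ hki hkj] at this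
      exact Or.inl fun xj y => this xj false y
    · have := (indep_j (k := k) hij _).1 h
      simp only [ident, mk3_j _ _ _ _ hij, mk3_upd_k _ _ _ _ _ hki hkj] at this
      exact Or.inr (Or.inl fun xj y => this xj false y)
    · exact absurd rfl hw
    · have := (indep_t t _).1 h
      simp only [ident, mk3_j _ _ _ _ hij, mk3_upd_k _ _ _ _ _ hki hkj] at this
      exact Or.inr (Or.inr ⟨t, fun xi xj => this xi xj false⟩)
  · -- H3
    intro t
    obtain ⟨w, hw, h⟩ := hl i t t.2.1.symm
    rcases index_cases i j k w with rfl | rfl | rfl | ⟨u, rfl⟩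
    · exact absurd rfl hw
    · have := (indep_j (k := k) hij _).1 h
      simp only [ident, mk3_t, mk3_upd_i] at this
      exact Or.inl fun xk y => this false xk y
    · have := (indep_k hki hkj _).1 h
      simp only [ident, mk3_t, mk3_upd_i] at this
      exact Or.inr (Or.inl fun xj y => this false xj y)
    · have := (indep_t u _).1 h
      simp only [ident, mk3_t, mk3_upd_i] at this
      exact Or.inr (Or.inr ⟨u, fun xj xk => this false xj xk⟩)
  · -- H4
    intro t u htu
    obtain ⟨w, hw, h⟩ := hl t u (fun h => htu (Subtype.ext h))
    rcases index_cases i j k w with rfl | rfl | rfl | ⟨s, rfl⟩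
    · have := (indep_i (j := j) (k := k) _).1 h
      simp only [ident, mk3_t, mk3_upd_t] at this
      exact Or.inl this
    · have := (indep_j (k := k) hij _).1 h
      simp only [ident, mk3_t, mk3_upd_t] at this
      exact Or.inr (Or.inl this)
    · have := (indep_k hki hkj _).1 h
      simp only [ident, mk3_t, mk3_upd_t] at this
      exact Or.inr (Or.inr (Or.inl this))
    · have := (indep_t s _).1 h
      simp only [ident, mk3_t, mk3_upd_t] at this
      exact Or.inr (Or.inr (Or.inr ⟨s, fun h => hw (congrArg _ h), this⟩))
  · -- H5
    intro t
    obtain ⟨w, hw, h⟩ := hl k t t.2.2.2.symm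
    rcases index_cases i j k w with rfl | rfl | rfl | ⟨u, rfl⟩
    · have := (indep_i (j := j) (k := k) _).1 h
      simp only [ident, mk3_t, mk3_upd_k _ _ _ _ _ hki hkj] at this
      exact Or.inl fun xj y => this xj false y
    · have := (indep_j (k := k) hij _).1 h
      simp only [ident, mk3_t, mk3_upd_k _ _ _ _ _ hki hkj] at this
      exact Or.inr (Or.inl fun xj y => this xj false y)
    · exact absurd rfl hw
    · have := (indep_t u _).1 h
      simp only [ident, mk3_t, mk3_upd_k _ _ _ _ _ hki hkj] at this
      exact Or.inr (Or.inr ⟨u, fun xi xj => this xi xj false⟩)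

end Transfer

/-! ### The parity case -/

def flipAt {n : ℕ} (i : Fin n) (a : Fin n → Bool) : Fin n → Bool := Function.update a i (!(a i))

theorem flipAt_flipAt {n : ℕ} (i : Fin n) (a : Fin n → Bool) : flipAt i (flipAt i a) = a := by
  simp [flipAt]

theorem flipAt_comm {n : ℕ} (i j : Fin n) (a : Fin n → Bool) :
    flipAt i (flipAt j a) = flipAt j (flipAt i a) := by
  by_cases h : i = j
  · subst h; rfl
  · simp [flipAt, h, Ne.symm h, Function.update_comm h]

theorem flipAt_ne {n : ℕ} {i j : Fin n} (h : j ≠ i) (a : Fin n → Bool) : flipAt i a j = a j := by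
  simp [flipAt, h]

theorem flipAt_self {n : ℕ} (i : Fin n) (a : Fin n → Bool) : flipAt i a i = !(a i) := by
  simp [flipAt]

theorem flip_pair_eq {n : ℕ} {f : (Fin n → Bool) → Bool} {i j : Fin n} (hij : i ≠ j)
    (h : IndepOf (ident f i j) j) (a : Fin n → Bool) (ha : a i = a j) :
    f (flipAt i (flipAt j a)) = f a := by
  have := h a (!(a j))
  simp only [ident, Function.update_self] at this
  rw [← ha, Function.update_eq_self] at this
  rw [← this]
  congr 1
  simp only [flipAt, Function.update_of_ne hij, ha]

theorem parity_case {n : ℕ} (hn : 3 ≤ n) {f : (Fin n → Bool) → Bool} (hf : ∀ i, Essential f i)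
    (h : ∀ i j, i ≠ j → IndepOf (ident f i j) j) : ∃ c, f = fH (gapE1 n c) := by
  have h2 : ∀ i j, i ≠ j → ∀ a, f (flipAt i (flipAt j a)) = f a := by
    intro i j hij a
    by_cases ha : a i = a j
    · exact flip_pair_eq hij (h i j hij) a ha
    · obtain ⟨k, hk⟩ : ∃ k, k ∉ ({i, j} : Finset (Fin n)) := by
        by_contra hcon
        push Not at hcon
        have h1 : (Finset.univ : Finset (Fin n)) ⊆ {i, j} := fun x _ => hcon x
        have h2 := Finset.card_le_card h1
        have h3 := Finset.card_le_two (a := i) (b := j)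
        rw [Finset.card_fin] at h2
        omega
      simp only [Finset.mem_insert, Finset.mem_singleton, not_or] at hk
      obtain ⟨hki, hkj⟩ := hk
      have gen : ∀ p q, p ≠ q → k ≠ p → k ≠ q → a k = a p → a p ≠ a q →
          f (flipAt p (flipAt q a)) = f a := by
        intro p q hpq hkp hkq h1 h2
        have e1 := flip_pair_eq hkp (h k p hkp) a h1
        have e2 := flip_pair_eq hkq (h k q hkq) (flipAt k (flipAt p a)) (by
          rw [flipAt_self, flipAt_ne hkp, flipAt_ne hkq.symm, flipAt_ne hpq.symm, h1]
          revert h2; cases a p <;> cases a q <;> simp)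
        rw [e1] at e2
        rw [← e2, flipAt_comm q k, flipAt_flipAt, flipAt_comm]
      by_cases hk : a k = a i
      · exact gen i j hij hki hkj hk ha
      · rw [flipAt_comm]
        refine gen j i hij.symm hkj hki ?_ (Ne.symm ha)
        revert hk ha; cases a i <;> cases a j <;> cases a k <;> simp
  have h3 : ∀ i j a, f (flipAt i a) = f (flipAt j a) := by
    intro i j a
    by_cases hij : i = j
    · rw [hij]
    · rw [← h2 j i (Ne.symm hij) (flipAt i a), flipAt_flipAt]
  obtain ⟨a, ha⟩ : ∃ a, ∀ j, f (flipAt j a) ≠ f a := by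
    obtain ⟨a, b, hab, hne⟩ := hf ⟨0, by omega⟩
    have hb : b = flipAt ⟨0, by omega⟩ a := by
      funext j
      by_cases hj : j = ⟨0, by omega⟩
      · subst hj
        rw [flipAt_self]
        have : a ⟨0, by omega⟩ ≠ b ⟨0, by omega⟩ := by
          intro he
          apply hne
          congr 1
          funext j
          by_cases hj : j = ⟨0, by omega⟩
          · rw [hj, he]
          · exact hab j hj
        revert this
        generalize a ⟨0, _⟩ = x
        generalize b ⟨0, _⟩ = y
        cases x <;> cases y <;> simp
      · rw [flipAt_ne hj, hab j hj]
    refine ⟨a, fun j => ?_⟩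
    rw [h3 j ⟨0, by omega⟩, ← hb]
    exact hne.symm
  have step : ∀ a, (∀ j, f (flipAt j a) ≠ f a) → ∀ i j, f (flipAt j (flipAt i a)) ≠ f (flipAt i a) := by
    intro a ha i j
    rw [h3 j i, flipAt_flipAt]
    exact (ha i).symm
  have ins : ∀ (a : Fin n → Bool) i (S : Finset (Fin n)), i ∉ S →
      (fun x => a x ^^ decide (x ∈ insert i S)) = flipAt i (fun x => a x ^^ decide (x ∈ S)) := by
    intro a i S hi
    funext x
    by_cases hx : x = i
    · subst hx; simp [flipAt, hi]
    · simp [flipAt, hx]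
  have all : ∀ S : Finset (Fin n), ∀ j, f (flipAt j (fun x => a x ^^ decide (x ∈ S))) ≠
      f (fun x => a x ^^ decide (x ∈ S)) := by
    intro S
    induction S using Finset.induction_on with
    | empty => simpa using ha
    | insert i S hi ih =>
      rw [ins a i S hi]
      exact step _ ih i
  have all' : ∀ b j, f (flipAt j b) = !(f b) := by
    intro b j
    have := all (Finset.univ.filter fun x => a x ≠ b x) j
    have e : (fun x => a x ^^ decide (x ∈ Finset.univ.filter fun x => a x ≠ b x)) = b := by
      funext x
      cases h1 : a x <;> cases h2 : b x <;> simp [h1, h2]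
    rw [e] at this
    revert this
    cases f (flipAt j b) <;> cases f b <;> simp
  refine ⟨f (fun _ => false), ?_⟩
  have par : ∀ S : Finset (Fin n), f (fun x => false ^^ decide (x ∈ S)) =
      (decide (Odd S.card) ^^ f (fun _ => false)) := by
    intro S
    induction S using Finset.induction_on with
    | empty => simp
    | insert i S hi ih =>
      rw [ins (fun _ => false) i S hi, all', ih, Finset.card_insert_of_notMem hi]
      simp only [Nat.odd_add_one, decide_not]
      simp
  funext b
  rw [fH_E1, ← par]
  congr 1
  funext x
  simp

/-! ### Main results -/

def Listed (f : BF) : Prop := ∃ c : Bool,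
      (∃ m : ℕ, 2 ≤ m ∧ EquivBF f ⟨m, fH (gapE1 m c)⟩) ∨
      EquivBF f ⟨2, fH (gapE2 c)⟩ ∨
      EquivBF f ⟨3, fH (gapE3 c)⟩ ∨
      EquivBF f ⟨3, fH (gapE4 c)⟩

theorem equiv_of_eq {n : ℕ} {f g : (Fin n → Bool) → Bool} (h : ∀ a, f a = g a) :
    EquivBF ⟨n, f⟩ ⟨n, g⟩ := by
  have : f = g := funext h
  subst this
  exact EquivBF.refl' _

theorem listed_two {f : (Fin 2 → Bool) → Bool} (hf : ∀ i, Essential f i) (hl : LoseTwo f) :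
    Listed ⟨2, f⟩ := by
  have hfun : ∀ a : Fin 2 → Bool, a = ![a 0, a 1] := by
    intro a; funext x; fin_cases x <;> rfl
  have hd : f ![false, false] = f ![true, true] := by
    obtain ⟨k, hk, h⟩ := hl 0 1 (by decide)
    have hk1 : k = 1 := by omega
    subst hk1
    have := h ![false, false] true
    simp only [ident] at this
    rw [hfun (Function.update _ _ _)] at this
    rw [hfun (Function.update ![false, false] 0 _)] at this
    simpa using this.symm
  have hE : ¬ (f ![true, false] = f ![false, false] ∧ f ![false, true] = f ![false, false]) := by
    rintro ⟨h1, h2⟩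
    obtain ⟨a, b, -, hne⟩ := hf 0
    apply hne
    rw [hfun a, hfun b]
    cases a 0 <;> cases a 1 <;> cases b 0 <;> cases b 1 <;> simp only [h1, h2, ← hd]
  by_cases h1 : f ![true, false] = f ![false, false]
  · have h2 : f ![false, true] = !f ![false, false] := by
      have : ¬ f ![false, true] = f ![false, false] := fun h => hE ⟨h1, h⟩
      revert this; cases f ![false, true] <;> cases f ![false, false] <;> simp
    refine ⟨f ![false, false], Or.inr (Or.inl (equiv_of_bij (σ := ![1, 0]) ?_ (by decide)))⟩
    intro a
    rw [fH_E2, hfun a]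
    cases a 0 <;> cases a 1 <;> simp [h1, h2, ← hd]
  · have h1' : f ![true, false] = !f ![false, false] := by
      revert h1; cases f ![true, false] <;> cases f ![false, false] <;> simp
    by_cases h2 : f ![false, true] = f ![false, false]
    · refine ⟨f ![false, false], Or.inr (Or.inl (equiv_of_eq ?_))⟩
      intro a
      rw [fH_E2, hfun a]
      cases a 0 <;> cases a 1 <;> simp [h1', h2, ← hd]
    · have h2' : f ![false, true] = !f ![false, false] := by
        revert h2; cases f ![false, true] <;> cases f ![false, false] <;> simp
      refine ⟨f ![false, false], Or.inl ⟨2, le_rfl, equiv_of_eq ?_⟩⟩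
      intro a
      rw [fH_E1, hfun a]
      have e : ∀ x y : Bool, decide (Odd (Finset.univ.filter
        fun i : Fin 2 => ![x, y] i = true).card) = (x ^^ y) := by decide
      rw [e]
      cases a 0 <;> cases a 1 <;> simp [h1', h2', ← hd]

theorem listed_of_lose {n : ℕ} (hn : 2 ≤ n) {f : (Fin n → Bool) → Bool} (hf : ∀ i, Essential f i)
    (hl : LoseTwo f) : Listed ⟨n, f⟩ := by
  rcases Nat.lt_or_ge 2 n with h3 | h3
  swap
  · obtain rfl : n = 2 := by omega
    exact listed_two hf hl
  by_cases hp : ∀ i j, i ≠ j → IndepOf (ident f i j) j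
  · obtain ⟨c, hc⟩ := parity_case h3 hf hp
    exact ⟨c, Or.inl ⟨n, hn, equiv_of_eq (fun a => by rw [hc])⟩⟩
  · push Not at hp
    obtain ⟨i, j, hij, hnj⟩ := hp
    obtain ⟨k, hki, hk⟩ := hl i j hij
    have hkj : k ≠ j := by rintro rfl; exact hnj hk
    obtain ⟨hall, h⟩ := classify3 hf hl hij hki hkj hk
    have hb : Function.Bijective ![i, j, k] := by
      constructor
      · intro x y
        fin_cases x <;> fin_cases y <;> simp [hij, hij.symm, hki, hkj, hki.symm, hkj.symm]
      · intro v
        rcases hall v with h | h | h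
        · exact ⟨0, h.symm⟩
        · exact ⟨1, h.symm⟩
        · exact ⟨2, h.symm⟩
    have hne : f (fun _ => true) = !f (fun _ => false) := by
      by_contra hcon
      have heq : f (fun _ => true) = f (fun _ => false) := by
        revert hcon; cases f (fun _ => true) <;> cases f (fun _ => false) <;> simp
      obtain ⟨a, b, -, hne⟩ := hf i
      apply hne
      rcases h with h | h <;> rw [h a, h b, heq] <;> simp
    refine ⟨f (fun _ => false), Or.inr (Or.inr ?_)⟩
    rcases h with h | h
    · left
      refine equiv_of_bij (σ := ![i, j, k]) ?_ hb
      intro a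
      rw [fH_E3, h, hne]
      simp only [Function.comp, Matrix.cons_val_zero, Matrix.cons_val_one, Matrix.cons_val]
      cases a i <;> cases a j <;> cases a k <;> simp
    · right
      refine equiv_of_bij (σ := ![i, j, k]) ?_ hb
      intro a
      rw [fH_E4, h, hne]
      simp only [Function.comp, Matrix.cons_val_zero, Matrix.cons_val_one, Matrix.cons_val]
      cases a i <;> cases a j <;> cases a k <;> simp

theorem fH_E1_flip (m : ℕ) (c : Bool) (i : Fin m) (a : Fin m → Bool) :
    fH (gapE1 m c) (flipAt i a) = !fH (gapE1 m c) a := by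
  have key : ∀ a : Fin m → Bool, a i = false →
      fH (gapE1 m c) (flipAt i a) = !fH (gapE1 m c) a := by
    intro a ha
    rw [fH_E1, fH_E1]
    have : (Finset.univ.filter fun x => flipAt i a x = true) =
        insert i (Finset.univ.filter fun x => a x = true) := by
      ext x
      by_cases hx : x = i
      · subst hx; simp [flipAt, ha]
      · simp [flipAt_ne hx, hx]
    rw [this, Finset.card_insert_of_notMem (by simp [ha])]
    simp only [Nat.odd_add_one, decide_not]
    simp
  cases ha : a i
  · exact key a ha
  · have := key (flipAt i a) (by simp [flipAt, ha])
    rw [flipAt_flipAt] at this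
    rw [this]; simp

theorem essential_of_flip {n : ℕ} {f : (Fin n → Bool) → Bool} {i : Fin n} (a : Fin n → Bool)
    (h : f (flipAt i a) ≠ f a) : Essential f i :=
  ⟨_, _, fun _ hj => flipAt_ne hj a, h⟩

theorem gap_E1 {m : ℕ} (hm : 2 ≤ m) (c : Bool) : gapBF ⟨m, fH (gapE1 m c)⟩ = 2 := by
  have hE : ∀ i, Essential (fH (gapE1 m c)) i := fun i =>
    essential_of_flip (fun _ => false) (by rw [fH_E1_flip]; simp)
  have h01 : (⟨0, by omega⟩ : Fin m) ≠ ⟨1, by omega⟩ := by simp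
  refine gap_two hm hE ?_ h01 ?_
  · intro i j hij
    refine ⟨j, hij.symm, ?_⟩
    have key : ∀ a, ident (fH (gapE1 m c)) i j (flipAt j a) = ident (fH (gapE1 m c)) i j a := by
      intro a
      have e : Function.update (flipAt j a) i (flipAt j a j) =
          flipAt i (flipAt j (Function.update a i (a j))) := by
        funext x
        by_cases hx : x = i
        · subst hx; simp [flipAt, hij]
        · by_cases hx' : x = j
          · subst hx'; simp [flipAt, hx]
          · simp [flipAt, hx, hx']
      simp only [ident]
      rw [e, fH_E1_flip, fH_E1_flip]
      simp
    intro a v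
    by_cases hv : v = a j
    · rw [hv, Function.update_eq_self]
    · have : v = !(a j) := by revert hv; cases v <;> cases a j <;> simp
      rw [this]
      exact key a
  · have e2 := le_essArity (f := ident (fH (gapE1 m c)) ⟨0, by omega⟩ ⟨1, by omega⟩)
      (((Finset.univ : Finset (Fin m)).erase ⟨0, by omega⟩).erase ⟨1, by omega⟩) (by
      intro k hk
      simp only [Finset.mem_erase, Finset.mem_univ, and_true] at hk
      apply essential_of_flip (fun _ => false)
      simp only [ident]
      rw [flipAt_ne hk.1.symm]
      have e : Function.update (flipAt k fun _ => false) ⟨0, by omega⟩ false =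
          flipAt k (Function.update (fun _ => false) (⟨0, by omega⟩ : Fin m) false) := by
        simp only [flipAt, Function.update_of_ne hk.2]
        rw [Function.update_comm hk.2]
      rw [e, fH_E1_flip]
      simp)
    rw [Finset.card_erase_of_mem (by simp), Finset.card_erase_of_mem (by simp)] at e2
    simp only [Finset.card_fin] at e2
    omega

theorem gap_E2 (c : Bool) : gapBF ⟨2, fH (gapE2 c)⟩ = 2 := by
  have hfun : fH (gapE2 c) = fun a => ((a 0 && a 1) ^^ a 0 ^^ c) := funext (fH_E2 c)
  rw [hfun]
  refine gap_two le_rfl (i := 0) (j := 1) ?_ ?_ (by decide) (by simp)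
  · unfold Essential; revert c; decide
  · unfold LoseTwo IndepOf ident; revert c; decide

theorem gap_E3 (c : Bool) : gapBF ⟨3, fH (gapE3 c)⟩ = 2 := by
  have hfun : fH (gapE3 c) = fun a => ((a 0 && a 1) ^^ (a 0 && a 2) ^^ (a 1 && a 2) ^^ c) :=
    funext (fH_E3 c)
  rw [hfun]
  refine gap_two (by norm_num) (i := 0) (j := 1) ?_ ?_ (by decide) ?_
  · unfold Essential; revert c; decide
  · unfold LoseTwo IndepOf ident; revert c; decide
  · refine le_trans ?_ (le_essArity {1} ?_)
    · simp
    · unfold Essential ident; revert c; decide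

theorem gap_E4 (c : Bool) : gapBF ⟨3, fH (gapE4 c)⟩ = 2 := by
  have hfun : fH (gapE4 c) = fun a =>
      ((a 0 && a 1) ^^ (a 0 && a 2) ^^ (a 1 && a 2) ^^ a 0 ^^ a 1 ^^ c) :=
    funext (fH_E4 c)
  rw [hfun]
  refine gap_two (by norm_num) (i := 0) (j := 1) ?_ ?_ (by decide) ?_
  · unfold Essential; revert c; decide
  · unfold LoseTwo IndepOf ident; revert c; decide
  · refine le_trans ?_ (le_essArity {1} ?_)
    · simp
    · unfold Essential ident; revert c; decide

theorem gap_of_listed {f : BF} (h : Listed f) : gapBF f = 2 := by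
  obtain ⟨c, ⟨m, hm, h⟩ | h | h | h⟩ := h
  · rw [gapBF_congr h, gap_E1 hm]
  · rw [gapBF_congr h, gap_E2]
  · rw [gapBF_congr h, gap_E3]
  · rw [gapBF_congr h, gap_E4]

theorem Listed.congr' {f g : BF} (hfg : EquivBF f g) (h : Listed g) : Listed f := by
  obtain ⟨c, ⟨m, hm, h⟩ | h | h | h⟩ := h
  · exact ⟨c, Or.inl ⟨m, hm, hfg.trans' h⟩⟩
  · exact ⟨c, Or.inr (Or.inl (hfg.trans' h))⟩
  · exact ⟨c, Or.inr (Or.inr (Or.inl (hfg.trans' h)))⟩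
  · exact ⟨c, Or.inr (Or.inr (Or.inr (hfg.trans' h)))⟩

theorem gap_one_or_listed (f : BF) (h2 : 2 ≤ essArity f.2) : gapBF f = 1 ∨ Listed f := by
  obtain ⟨⟨n, g⟩, hfg, hg⟩ := exists_reduced f h2
  have hn : 2 ≤ n := by
    rw [essArity_congr hfg] at h2
    simpa only [essArity_reduced hg] using h2
  rcases gap_pos_le hn hg with h | h
  · left; rw [gapBF_congr hfg, h]
  · right; exact (listed_of_lose hn hg h).congr' hfg

theorem arity_gap_classification (f : BF) (h2 : 2 ≤ essArity f.2) :
    (gapBF f = 2 ↔ ∃ c : Bool,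
      (∃ m : ℕ, 2 ≤ m ∧ EquivBF f ⟨m, fH (gapE1 m c)⟩) ∨
      EquivBF f ⟨2, fH (gapE2 c)⟩ ∨
      EquivBF f ⟨3, fH (gapE3 c)⟩ ∨
      EquivBF f ⟨3, fH (gapE4 c)⟩) ∧
    (gapBF f = 1 ∨ gapBF f = 2) := by

  change (gapBF f = 2 ↔ Listed f) ∧ _
  rcases gap_one_or_listed f h2 with h | h
  · refine ⟨⟨fun h' => by omega, fun h' => gap_of_listed h'⟩, Or.inl h⟩
  · exact ⟨⟨fun _ => h, fun _ => gap_of_listed h⟩, Or.inr (gap_of_listed h)⟩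
end
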